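/- Let d ≥ 2 be an integer. Let (M_n(1),…,M_n(m)) be the occupancy counts of the uniform occupancy model with n balls and m urns, and for i ≠ j define b_{n,m}(i,j) = [C(n−d, d)·C(d−M_n(i), M_n(j)−d) / C(n−M_n(i), M_n(j))] · 1{M_n(i)+M_n(j) ≤ 2d, M_n(j) > d}. Then there exist an integer n₁, a real r₁ > 0, and a constant C, all depending only on d, such that for all n ≥ n₁ and all m ≥ 2 with r_{n,m} ≥ r₁, Var(Σ_{1 ≤ i,j ≤ m, i≠j} b_{n,m}(i,j)) ≤ C·m²/n. -/

import Mathlib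

open MeasureTheory ProbabilityTheory

/-- The uniform occupancy model: `n` balls are placed independently and uniformly at
random into `m` urns. -/
noncomputable def occ (n m : ℕ) : Measure (Fin n → Fin m) :=
  (Fintype.card (Fin n → Fin m) : ENNReal)⁻¹ • Measure.count

/-- The number of balls in urn `i`. -/
def ballCount {n m : ℕ} (ω : Fin n → Fin m) (i : Fin m) : ℕ :=
  (Finset.univ.filter fun b => ω b = i).card

/-- The number of urns containing exactly `d` balls. -/
def urnCount (d : ℕ) {n m : ℕ} (ω : Fin n → Fin m) : ℕ :=
  (Finset.univ.filter fun i => ballCount ω i = d).card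

/-- `μ_{n,m}`, the mean number of urns containing exactly `d` balls. -/
noncomputable def occMean (d n m : ℕ) : ℝ :=
  ∫ ω, (urnCount d ω : ℝ) ∂(occ n m)


/-- `σ²_{n,m}`, the variance of the number of urns containing exactly `d` balls. -/
noncomputable def occVar (d n m : ℕ) : ℝ :=
  variance (fun ω => (urnCount d ω : ℝ)) (occ n m)

/-- `r_{n,m} = σ_{n,m} / (1 + (n/m)³)`. -/
noncomputable def occR (d n m : ℕ) : ℝ :=
  Real.sqrt (occVar d n m) / (1 + ((n : ℝ) / m) ^ 3)

/-- The summand `b_{n,m}(i,j)` of Lemma 3.3, Equation (3.15). -/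
noncomputable def bTerm (d n m : ℕ) (ω : Fin n → Fin m) (i j : Fin m) : ℝ :=
  if ballCount ω i + ballCount ω j ≤ 2 * d ∧ d < ballCount ω j then
    ((n - d).choose d : ℝ) * ((d - ballCount ω i).choose (ballCount ω j - d) : ℝ)
      / ((n - ballCount ω i).choose (ballCount ω j) : ℝ)
  else 0

/-! Moving one ball changes the occupancies of two urns only, hence at most `4 * m` of the ordered
pairs `(i, j)`, and each summand lies in `[0, K / n]` with `K` depending only on `d`. So the sum has
differences at most `4 * m * K / n` in each of the `n` independent ball positions, and the
Efron–Stein inequality bounds its variance by `n * (4 * m * K / n) ^ 2 / 4`. -/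

section Variance

variable {α β : Type*} [MeasurableSpace α] [MeasurableSpace β]

theorem integral_variance_add_variance_integral {μ : Measure α} {ν : Measure β}
    [IsProbabilityMeasure μ] [IsProbabilityMeasure ν] {f : α × β → ℝ}
    (hf : MemLp f 2 (μ.prod ν)) :
    ∫ x, Var[fun y => f (x, y); ν] ∂μ + Var[fun x => ∫ y, f (x, y) ∂ν; μ]
      = Var[f; μ.prod ν] := by
  have hsq : Integrable (fun z => f z ^ 2) (μ.prod ν) := hf.integrable_sq
  have hmean_meas : AEStronglyMeasurable (fun x => ∫ y, f (x, y) ∂ν) μ :=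
    hf.aestronglyMeasurable.integral_prod_right'
  have hsection : ∀ᵐ x ∂μ, MemLp (fun y => f (x, y)) 2 ν := by
    filter_upwards [hsq.prod_right_ae, hf.aestronglyMeasurable.prodMk_left] with x hx hmeas
    exact (memLp_two_iff_integrable_sq hmeas).2 hx
  have hvar : ∀ᵐ x ∂μ, Var[fun y => f (x, y); ν]
      = ∫ y, f (x, y) ^ 2 ∂ν - (∫ y, f (x, y) ∂ν) ^ 2 := by
    filter_upwards [hsection] with x hx
    exact variance_eq_sub hx
  have hmean_sq : Integrable (fun x => (∫ y, f (x, y) ∂ν) ^ 2) μ := by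
    refine hsq.integral_prod_left.mono' (hmean_meas.pow 2) ?_
    filter_upwards [hvar] with x hx
    rw [Real.norm_of_nonneg (sq_nonneg _)]
    exact sub_nonneg.1 (hx ▸ variance_nonneg _ _)
  have hmean : MemLp (fun x => ∫ y, f (x, y) ∂ν) 2 μ :=
    (memLp_two_iff_integrable_sq hmean_meas).2 hmean_sq
  rw [integral_congr_ae hvar, integral_sub hsq.integral_prod_left hmean_sq, variance_eq_sub hmean,
    variance_eq_sub hf, integral_prod _ (hf.integrable one_le_two)]
  simp only [Pi.pow_apply, integral_prod _ hsq, sub_add_sub_cancel]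

theorem variance_le_of_abs_sub_le {μ : Measure α} [IsProbabilityMeasure μ] {X : α → ℝ} {c : ℝ}
    (hX : AEMeasurable X μ) (hc : ∀ x y, |X x - X y| ≤ c) : Var[X; μ] ≤ c ^ 2 / 4 := by
  have : Nonempty α := nonempty_of_isProbabilityMeasure μ
  have hle (x y : α) : X x ≤ X y + c := by linarith [le_of_abs_le (hc x y)]
  have hbdd : BddAbove (Set.range X) :=
    ⟨X (Classical.arbitrary α) + c, Set.forall_mem_range.2 fun x => hle x _⟩
  have hmem (x : α) : X x ∈ Set.Icc (iSup X - c) (iSup X) :=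
    ⟨sub_le_iff_le_add.2 (ciSup_le fun y => hle y x), le_ciSup hbdd x⟩
  calc Var[X; μ] ≤ ((iSup X - (iSup X - c)) / 2) ^ 2 :=
        variance_le_sq_of_bounded (.of_forall hmem) hX
    _ = c ^ 2 / 4 := by ring

end Variance

/-- The bounded differences condition of McDiarmid's inequality: changing the `i`-th coordinate
alone changes `f` by at most `c i`. -/
def HasBoundedDifferences {ι : Type*} [DecidableEq ι] {α : ι → Type*} (f : (∀ i, α i) → ℝ)
    (c : ι → ℝ) : Prop :=
  ∀ ω i x, |f (Function.update ω i x) - f ω| ≤ c i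

namespace HasBoundedDifferences

theorem abs_sub_le_sum {ι : Type*} [Fintype ι] [DecidableEq ι] {α : ι → Type*}
    {f : (∀ i, α i) → ℝ} {c : ι → ℝ} (hf : HasBoundedDifferences f c) (ω ω' : ∀ i, α i) :
    |f ω - f ω'| ≤ ∑ i, c i := by
  suffices h : ∀ s : Finset ι, |f (s.piecewise ω ω') - f ω'| ≤ ∑ i ∈ s, c i by
    simpa only [Finset.piecewise_univ] using h Finset.univ
  intro s
  induction s using Finset.induction_on with
  | empty => simp
  | insert i s hi ih =>
    rw [Finset.piecewise_insert, Finset.sum_insert hi]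
    exact (abs_sub_le _ (f (s.piecewise ω ω')) _).trans (add_le_add (hf _ _ _) ih)

theorem memLp {ι : Type*} [Finite ι] [DecidableEq ι] {α : ι → Type*}
    [∀ i, MeasurableSpace (α i)] {μ : Measure (∀ i, α i)} [IsFiniteMeasure μ]
    {f : (∀ i, α i) → ℝ} {c : ι → ℝ} (hf : HasBoundedDifferences f c)
    (hmeas : AEStronglyMeasurable f μ) (p : ENNReal) : MemLp f p μ := by
  cases nonempty_fintype ι
  rcases isEmpty_or_nonempty (∀ i, α i) with _ | ⟨⟨ω₀⟩⟩
  · exact .of_bound hmeas 0 (.of_forall isEmptyElim)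
  · refine memLp_of_bounded (a := f ω₀ - ∑ i, c i) (b := f ω₀ + ∑ i, c i) (.of_forall fun ω => ?_)
      hmeas p
    exact ⟨by linarith [neg_le_of_abs_le (hf.abs_sub_le_sum ω ω₀)],
      by linarith [le_of_abs_le (hf.abs_sub_le_sum ω ω₀)]⟩

section Fin

variable {n : ℕ} {α : Fin (n + 1) → Type*} {f : (∀ i, α i) → ℝ} {c : Fin (n + 1) → ℝ}

theorem comp_insertNth (hf : HasBoundedDifferences f c) (p : Fin (n + 1)) (x : α p) :
    HasBoundedDifferences (fun ω => f (p.insertNth x ω)) (fun i => c (p.succAbove i)) := by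
  intro ω i y
  simp only [Fin.insertNth_update]
  exact hf _ _ _

theorem abs_insertNth_sub_le (hf : HasBoundedDifferences f c) (p : Fin (n + 1)) (x y : α p)
    (ω : ∀ i, α (p.succAbove i)) : |f (p.insertNth x ω) - f (p.insertNth y ω)| ≤ c p := by
  rw [← Fin.update_insertNth p y x ω]
  exact hf _ _ _

theorem abs_integral_insertNth_sub_le [∀ i, MeasurableSpace (α i)]
    (hf : HasBoundedDifferences f c) (hmeas : Measurable f) (p : Fin (n + 1))
    (ν : Measure (∀ i, α (p.succAbove i))) [IsProbabilityMeasure ν] (x y : α p) :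
    |∫ ω, f (p.insertNth x ω) ∂ν - ∫ ω, f (p.insertNth y ω) ∂ν| ≤ c p := by
  have hint (z : α p) : Integrable (fun ω => f (p.insertNth z ω)) ν := by
    refine ((hf.comp_insertNth p z).memLp ?_ 1).integrable le_rfl
    have hinsert : Measurable (p.insertNth (α := α) z) :=
      (MeasurableEquiv.piFinSuccAbove α p).symm.measurable.comp measurable_prodMk_left
    exact (hmeas.comp hinsert).aestronglyMeasurable
  calc |∫ ω, f (p.insertNth x ω) ∂ν - ∫ ω, f (p.insertNth y ω) ∂ν|
      = ‖∫ ω, (f (p.insertNth x ω) - f (p.insertNth y ω)) ∂ν‖ := by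
        rw [integral_sub (hint x) (hint y), Real.norm_eq_abs]
    _ ≤ c p * ν.real Set.univ :=
        norm_integral_le_of_norm_le_const (.of_forall fun ω => hf.abs_insertNth_sub_le p x y ω)
    _ = c p := by rw [probReal_univ, mul_one]

end Fin

theorem variance_pi_le {n : ℕ} {α : Fin n → Type*} [∀ i, MeasurableSpace (α i)]
    (μ : ∀ i, Measure (α i)) [∀ i, IsProbabilityMeasure (μ i)] {f : (∀ i, α i) → ℝ} {c : Fin n → ℝ}
    (hf : HasBoundedDifferences f c) (hmeas : Measurable f) :
    Var[f; Measure.pi μ] ≤ (∑ i, c i ^ 2) / 4 := by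
  induction n with
  | zero => exact (variance_le_of_abs_sub_le hmeas.aemeasurable hf.abs_sub_le_sum).trans (by simp)
  | succ n ih =>
    set ν := Measure.pi fun j => μ (Fin.succAbove 0 j)
    let e := MeasurableEquiv.piFinSuccAbove α 0
    let g : α 0 × (∀ j, α (Fin.succAbove 0 j)) → ℝ := fun z => f (e.symm z)
    have he : MeasurePreserving e.symm ((μ 0).prod ν) (Measure.pi μ) :=
      (measurePreserving_piFinSuccAbove μ 0).symm e
    have hg : Measurable g := hmeas.comp e.symm.measurable
    have hgL2 : MemLp g 2 ((μ 0).prod ν) :=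
      (hf.memLp (μ := Measure.pi μ) hmeas.aestronglyMeasurable 2).comp_measurePreserving he
    have hsection (x : α 0) :
        Var[fun ω => g (x, ω); ν] ≤ (∑ j : Fin n, c (Fin.succAbove 0 j) ^ 2) / 4 :=
      ih _ (hf.comp_insertNth 0 x) (hg.comp measurable_prodMk_left)
    have hmean : Var[fun x => ∫ ω, g (x, ω) ∂ν; μ 0] ≤ c 0 ^ 2 / 4 :=
      variance_le_of_abs_sub_le
        hgL2.aestronglyMeasurable.integral_prod_right'.aemeasurable
        (hf.abs_integral_insertNth_sub_le hmeas 0 ν)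
    calc Var[f; Measure.pi μ] = Var[g; (μ 0).prod ν] :=
          (he.variance_fun_comp hmeas.aemeasurable).symm
      _ = ∫ x, Var[fun ω => g (x, ω); ν] ∂(μ 0) + Var[fun x => ∫ ω, g (x, ω) ∂ν; μ 0] :=
          (integral_variance_add_variance_integral hgL2).symm
      _ ≤ ∫ _, (∑ j : Fin n, c (Fin.succAbove 0 j) ^ 2) / 4 ∂(μ 0) + c 0 ^ 2 / 4 :=
          add_le_add (integral_mono_of_nonneg (.of_forall fun _ => variance_nonneg _ _)
            (integrable_const _) (.of_forall hsection)) hmean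
      _ = (∑ i, c i ^ 2) / 4 := by
          rw [Fin.sum_univ_succAbove _ 0]
          simp only [integral_const, probReal_univ, one_smul]
          ring

end HasBoundedDifferences

theorem abs_sum_sum_le_of_eq_zero {ι : Type*} [Fintype ι] {s : Finset ι}
    {u : ι → ι → ℝ} {K : ℝ} (hu : ∀ i j, |u i j| ≤ K) (hs : ∀ i ∉ s, ∀ j ∉ s, u i j = 0) :
    |∑ i, ∑ j, u i j| ≤ 2 * s.card * Fintype.card ι * K := by
  classical
  have hterm (i j : ι) : |u i j| ≤ (if i ∈ s then K else 0) + (if j ∈ s then K else 0) := by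
    have hK : 0 ≤ K := (abs_nonneg _).trans (hu i j)
    have huij := hu i j
    split_ifs with hi hj hj
    · linarith
    · linarith
    · linarith
    · simp [hs i hi j hj]
  calc |∑ i, ∑ j, u i j| ≤ ∑ i, ∑ j, |u i j| :=
        (Finset.abs_sum_le_sum_abs _ _).trans
          (Finset.sum_le_sum fun i _ => Finset.abs_sum_le_sum_abs _ _)
    _ ≤ ∑ i, ∑ j, ((if i ∈ s then K else 0) + (if j ∈ s then K else 0)) :=
        Finset.sum_le_sum fun i _ => Finset.sum_le_sum fun j _ => hterm i j
    _ = 2 * s.card * Fintype.card ι * K := by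
        simp [Finset.sum_add_distrib]
        ring

section Occupancy

variable {n m : ℕ}

theorem occ_eq_pi_uniformOn (n m : ℕ) :
    occ n m = Measure.pi fun _ : Fin n => uniformOn (Set.univ : Set (Fin m)) := by
  rw [← uniformOn_pi, Set.pi_univ, uniformOn, ProbabilityTheory.cond, Measure.restrict_univ, occ]
  simp

theorem variance_occ_le [NeZero m] {f : (Fin n → Fin m) → ℝ} {c : ℝ}
    (hf : HasBoundedDifferences f fun _ => c) : Var[f; occ n m] ≤ n * c ^ 2 / 4 := by
  have : IsProbabilityMeasure (uniformOn (Set.univ : Set (Fin m))) :=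
    isProbabilityMeasure_uniformOn Set.finite_univ Set.univ_nonempty
  rw [occ_eq_pi_uniformOn]
  simpa using hf.variance_pi_le (fun _ => uniformOn Set.univ) .of_discrete

theorem ballCount_update_of_ne {ω : Fin n → Fin m} {b : Fin n} {x i : Fin m}
    (hx : i ≠ x) (hb : i ≠ ω b) : ballCount (Function.update ω b x) i = ballCount ω i := by
  unfold ballCount
  congr 1 with b'
  obtain rfl | h := eq_or_ne b' b
  · simp [hx.symm, hb.symm]
  · simp [h]

theorem hasBoundedDifferences_sum_sum_ballCount {g : Fin m → Fin m → ℕ → ℕ → ℝ} {K : ℝ}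
    (hg : ∀ i j k l, g i j k l ∈ Set.Icc 0 K) :
    HasBoundedDifferences
      (fun ω : Fin n → Fin m => ∑ i, ∑ j, g i j (ballCount ω i) (ballCount ω j))
      (fun _ => 4 * m * K) := by
  intro ω b x
  have hK : 0 ≤ K := (hg x x 0 0).1.trans (hg x x 0 0).2
  have hcard : (({x, ω b} : Finset (Fin m)).card : ℝ) ≤ 2 := by exact_mod_cast Finset.card_le_two
  have hunmoved {i : Fin m} (hi : i ∉ ({x, ω b} : Finset (Fin m))) :
      ballCount (Function.update ω b x) i = ballCount ω i := by
    simp only [Finset.mem_insert, Finset.mem_singleton, not_or] at hi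
    exact ballCount_update_of_ne hi.1 hi.2
  simp only [← Finset.sum_sub_distrib]
  calc _ ≤ 2 * ({x, ω b} : Finset (Fin m)).card * Fintype.card (Fin m) * K :=
        abs_sum_sum_le_of_eq_zero
          (fun i j => abs_sub_le_of_nonneg_of_le (hg _ _ _ _).1 (hg _ _ _ _).2 (hg _ _ _ _).1
            (hg _ _ _ _).2)
          (fun i hi j hj => by rw [hunmoved hi, hunmoved hj, sub_self])
    _ ≤ 2 * 2 * m * K := by
        rw [Fintype.card_fin]
        gcongr
    _ = 4 * m * K := by ring

end Occupancy

theorem choose_le_choose_mul_choose {n k s : ℕ} (hsk : s ≤ k) (hkn : k ≤ n) :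
    n.choose s ≤ n.choose k * k.choose s := by
  rw [Nat.choose_mul hsk]
  exact Nat.le_mul_of_pos_right _ (Nat.choose_pos (by omega))

theorem mul_choose_le_mul_choose {d k l : ℕ} (n : ℕ) (hkl : k + l ≤ 2 * d) (hl : d < l) :
    n * (n - d).choose d ≤ 2 * (d + 1) * 4 ^ d * (n - k).choose l := by
  obtain hn | hn := lt_or_ge n (2 * d)
  · simp [Nat.choose_eq_zero_of_lt (by omega : n - d < d)]
  have hl_choose : l.choose (d + 1) ≤ 4 ^ d :=
    calc l.choose (d + 1) ≤ 2 ^ l := Nat.choose_le_two_pow _ _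
      _ ≤ 2 ^ (2 * d) := Nat.pow_le_pow_right two_pos (by omega)
      _ = 4 ^ d := pow_mul 2 2 d
  calc n * (n - d).choose d ≤ 2 * (n - d + 1) * (n - d).choose d := by gcongr; omega
    _ = 2 * (d + 1) * (n - d + 1).choose (d + 1) := by
        rw [mul_assoc, Nat.add_one_mul_choose_eq]
        ring
    _ ≤ 2 * (d + 1) * (n - k).choose (d + 1) := by gcongr; omega
    _ ≤ 2 * (d + 1) * ((n - k).choose l * l.choose (d + 1)) := by
        gcongr
        exact choose_le_choose_mul_choose hl (by omega)
    _ ≤ 2 * (d + 1) * ((n - k).choose l * 4 ^ d) := by gcongr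
    _ = 2 * (d + 1) * 4 ^ d * (n - k).choose l := by ring

/-- The summand `b_{n,m}(i,j)` as a function of the occupancies `k` and `l` of the urns `i`
and `j`. -/
noncomputable def bWeight (d n k l : ℕ) : ℝ :=
  if k + l ≤ 2 * d ∧ d < l then
    ((n - d).choose d : ℝ) * ((d - k).choose (l - d) : ℝ) / ((n - k).choose l : ℝ)
  else 0

theorem bTerm_eq_bWeight (d n m : ℕ) (ω : Fin n → Fin m) (i j : Fin m) :
    bTerm d n m ω i j = bWeight d n (ballCount ω i) (ballCount ω j) :=
  rfl

theorem bWeight_nonneg (d n k l : ℕ) : 0 ≤ bWeight d n k l := by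
  unfold bWeight
  split_ifs <;> positivity

theorem bWeight_le {n : ℕ} (hn : 0 < n) (d k l : ℕ) :
    bWeight d n k l ≤ 2 * (d + 1) * 8 ^ d / n := by
  unfold bWeight
  split_ifs with h
  swap
  · positivity
  have hchoose : (n : ℝ) * (n - d).choose d ≤ 2 * (d + 1) * 4 ^ d * (n - k).choose l := by
    exact_mod_cast mul_choose_le_mul_choose n h.1 h.2
  have hpow : ((d - k).choose (l - d) : ℝ) ≤ 2 ^ d := by
    exact_mod_cast (Nat.choose_le_two_pow _ _).trans
      (Nat.pow_le_pow_right two_pos (Nat.sub_le d k))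
  refine div_le_of_le_mul₀ (by positivity) (by positivity) ?_
  rw [div_mul_eq_mul_div, le_div_iff₀ (by positivity)]
  calc ((n - d).choose d : ℝ) * (d - k).choose (l - d) * n
      = n * (n - d).choose d * (d - k).choose (l - d) := by ring
    _ ≤ 2 * (d + 1) * 4 ^ d * (n - k).choose l * 2 ^ d := by gcongr
    _ = 2 * (d + 1) * 8 ^ d * (n - k).choose l := by
        rw [show (8 : ℝ) = 4 * 2 by norm_num, mul_pow]
        ring

theorem variance_bTerm_sum_le_general (d : ℕ) {n m : ℕ} (hn : 0 < n) (hm : 0 < m) :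
    variance (fun ω : Fin n → Fin m =>
        ∑ i : Fin m, ∑ j : Fin m, if i ≠ j then bTerm d n m ω i j else 0)
      (occ n m)
    ≤ (4 * (d + 1) * 8 ^ d) ^ 2 * (m : ℝ) ^ 2 / n := by
  have : NeZero m := ⟨hm.ne'⟩
  have hbdd : ∀ (i j : Fin m) (k l : ℕ),
      (if i ≠ j then bWeight d n k l else 0) ∈ Set.Icc 0 (2 * (d + 1) * 8 ^ d / (n : ℝ)) := by
    intro i j k l
    split_ifs
    · exact ⟨bWeight_nonneg d n k l, bWeight_le hn d k l⟩
    · exact ⟨le_rfl, by positivity⟩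
  simp only [bTerm_eq_bWeight]
  refine (variance_occ_le (hasBoundedDifferences_sum_sum_ballCount hbdd)).trans_eq ?_
  field_simp
  ring

/-- Lemma 3.3, bound (3.15): `Var(Σ_{i≠j} b_{n,m}(i,j)) ≤ C·m²/n`. -/
theorem variance_bTerm_sum_le (d : ℕ) (hd : 2 ≤ d) :
    ∃ (n₁ : ℕ) (r₁ C : ℝ), 0 < r₁ ∧ 0 < C ∧
      ∀ n m : ℕ, n₁ ≤ n → 2 ≤ m → r₁ ≤ occR d n m →
        variance (fun ω : Fin n → Fin m =>
            ∑ i : Fin m, ∑ j : Fin m, if i ≠ j then bTerm d n m ω i j else 0)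
          (occ n m)
        ≤ C * (m : ℝ) ^ 2 / n := by
  exact ⟨1, 1, (4 * (d + 1) * 8 ^ d) ^ 2, one_pos, by positivity,
    fun n m hn hm _ => variance_bTerm_sum_le_general d hn (by omega)⟩
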